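/- Let G be a graph, let P = v_0, v_1, …, v_t be a longest path in G (i.e. no path of G has more edges), and let R be the set of all vertices v ∈ V(P) such that there exists a path P' in G with V(P') = V(P) whose endpoints are v_0 and v. Then |N_G(R)| ≤ 2|R| − 1, where N_G(R) = {u ∈ V(G) \ R : u has a neighbour in R}. -/

import Mathlib

/-- The external neighbourhood of a vertex set `R`: vertices outside `R` having a
neighbour in `R`. -/
def extNbhd {V : Type*} (G : SimpleGraph V) (R : Set V) : Set V :=
  {u | u ∉ R ∧ ∃ v ∈ R, G.Adj u v}

/-!
Fix a path `p` starting at `v₀` and let `C` be the set of ends of the paths obtained from `p` by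
repeated rotations. If neither `u` nor a neighbour of `u` along `p` is in `C`, then no rotation
affects the edges at `u`; so were `u` on `p` and adjacent to the end of a rotated path `q`, rotating
`q` at `u` would put the successor of `u` on `q`, hence a neighbour of `u` along `p`, into `C`. Thus
the neighbours of `C` that lie on `p` outside `C` are neighbours of `C` along `p`, and there are at
most `2 |C| - 1` of them because the end of `p` has only one neighbour along `p`.

The set `R` of ends of all paths from `v₀` on a given vertex set is a union of such sets `C`, for
varying `p`. These are added one at a time: if `U ⊆ R` is the union so far, then a vertex outside
`R` with a neighbour in `C` either has a neighbour in `U` or is a neighbour of `C \ U` along `p`, so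
at most `2 |C \ U|` new vertices appear.
-/

theorem encard_biUnion_le_mul {ι α : Type*} {s : Set ι} {f : ι → Set α} {k : ℕ∞}
    (hf : ∀ i ∈ s, (f i).encard ≤ k) : (⋃ i ∈ s, f i).encard ≤ k * s.encard := by
  rcases s.finite_or_infinite with hs | hs
  · induction s, hs using Set.Finite.induction_on with
    | empty => simp
    | @insert i s hi _ ih =>
      rw [Set.biUnion_insert, Set.encard_insert_of_notMem hi, mul_add, mul_one, add_comm]
      exact (Set.encard_union_le _ _).trans <|
        add_le_add (hf i (s.mem_insert i)) (ih fun j hj => hf j (s.mem_insert_of_mem i hj))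
  · rcases eq_or_ne k 0 with rfl | hk
    · have hempty : ∀ i ∈ s, f i = ∅ := by simpa using hf
      simpa using hempty
    · simp [hs.encard_eq, hk]

theorem induction_on_union_cover {α : Type*} {R : Set α} (hRfin : R.Finite) (hne : R.Nonempty)
    {motive : Set α → Prop}
    (hcover : ∀ w ∈ R, ∃ C ⊆ R, w ∈ C ∧ motive C ∧ ∀ U, motive U → motive (U ∪ C)) :
    motive R := by
  have hexists : {U | U ⊆ R ∧ motive U}.Nonempty :=
    let ⟨w, hw⟩ := hne
    let ⟨C, hCR, _, hC, _⟩ := hcover w hw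
    ⟨C, hCR, hC⟩
  obtain ⟨U, ⟨hUR, hU⟩, hUmax⟩ :=
    (hRfin.finite_subsets.subset fun _ h => h.1).exists_maximal hexists
  have hRU : R ⊆ U := fun w hw => by
    obtain ⟨C, hCR, hwC, -, hunion⟩ := hcover w hw
    exact hUmax ⟨Set.union_subset hUR hCR, hunion U hU⟩ Set.subset_union_left (.inr hwC)
  exact hUR.antisymm hRU ▸ hU

section

variable {V : Type*} {G : SimpleGraph V} {v₀ w x u : V} {p : G.Walk v₀ w} {q : G.Walk v₀ x}

open SimpleGraph

theorem encard_neighborSet_toSubgraph_end_le_one (hp : p.IsPath) :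
    (p.toSubgraph.neighborSet w).encard ≤ 1 := by
  by_cases hnil : p.Nil
  · cases hnil
    simp
  · rw [hp.neighborSet_toSubgraph_endpoint hnil, Set.encard_singleton]

theorem encard_neighborSet_toSubgraph_le_two (hp : p.IsPath) (y : V) :
    (p.toSubgraph.neighborSet y).encard ≤ 2 := by
  by_cases hy : y ∈ p.support
  · obtain ⟨i, rfl, hi⟩ := Walk.mem_support_iff_exists_getVert.mp hy
    rcases eq_or_ne i 0 with rfl | hi₀
    · have hstart := encard_neighborSet_toSubgraph_end_le_one hp.reverse
      rw [Walk.toSubgraph_reverse] at hstart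
      rw [Walk.getVert_zero]
      exact hstart.trans one_le_two
    rcases hi.eq_or_lt with rfl | hlt
    · rw [Walk.getVert_length]
      exact (encard_neighborSet_toSubgraph_end_le_one hp).trans one_le_two
    · rw [hp.neighborSet_toSubgraph_internal hi₀ hlt]
      exact (Set.encard_insert_le _ _).trans_eq (by rw [Set.encard_singleton, one_add_one_eq_two])
  · have hempty : p.toSubgraph.neighborSet y = ∅ :=
      Set.eq_empty_of_forall_notMem fun _ h => hy (Walk.mem_support_of_adj_toSubgraph h)
    simp [hempty]

theorem encard_biUnion_neighborSet_toSubgraph_le (hp : p.IsPath) (T : Set V) :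
    (⋃ y ∈ T, p.toSubgraph.neighborSet y).encard ≤ 2 * T.encard :=
  encard_biUnion_le_mul fun y _ => encard_neighborSet_toSubgraph_le_two hp y

theorem encard_biUnion_neighborSet_toSubgraph_add_one_le (hp : p.IsPath) {T : Set V}
    (hw : w ∈ T) :
    (⋃ y ∈ T, p.toSubgraph.neighborSet y).encard + 1 ≤ 2 * T.encard := by
  rw [← Set.insert_sdiff_self_of_mem hw, Set.biUnion_insert,
    Set.encard_insert_of_notMem (by simp)]
  calc _ ≤ 1 + 2 * (T \ {w}).encard + 1 := by
        gcongr
        refine (Set.encard_union_le _ _).trans (add_le_add ?_ ?_)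
        · exact encard_neighborSet_toSubgraph_end_le_one hp
        · exact encard_biUnion_neighborSet_toSubgraph_le hp _
    _ = 2 * ((T \ {w}).encard + 1) := by ring

/-- `RotationReachable p q` says that `q` arises from `p` by a sequence of Pósa rotations. A
rotation turns a walk `v₀ … y z … x` whose end `x` is adjacent to `y` into `v₀ … y x … z`; here
`z = x`, which changes nothing, is allowed. -/
inductive RotationReachable (p : G.Walk v₀ w) : ∀ {x : V}, G.Walk v₀ x → Prop
  | refl : RotationReachable p p
  | rotate {x y z : V} (a : G.Walk v₀ y) (hyz : G.Adj y z) (c : G.Walk z x) (hyx : G.Adj y x) :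
      RotationReachable p (a.append (.cons hyz c)) →
      RotationReachable p (a.append (.cons hyx c.reverse))

/-- The ends of the walks that arise from `p` by rotations. -/
def rotationEnds (p : G.Walk v₀ w) : Set V :=
  {x | ∃ q : G.Walk v₀ x, RotationReachable p q}

theorem end_mem_rotationEnds (p : G.Walk v₀ w) : w ∈ rotationEnds p := ⟨p, .refl⟩

namespace RotationReachable

theorem support_perm (h : RotationReachable p q) : q.support.Perm p.support := by
  induction h with
  | refl => rfl
  | rotate a hyz c hyx _ ih =>
    refine .trans ?_ ih
    simp only [Walk.support_append, Walk.support_cons, Walk.support_reverse, List.tail_cons]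
    exact (List.reverse_perm _).append_left _

theorem isPath (h : RotationReachable p q) (hp : p.IsPath) : q.IsPath := by
  rw [Walk.isPath_def] at hp ⊢
  exact h.support_perm.nodup_iff.mpr hp

theorem toSubgraph_adj_iff (h : RotationReachable p q) (hu : u ∉ rotationEnds p)
    (hnbr : ∀ y, p.toSubgraph.Adj u y → y ∉ rotationEnds p) (y : V) :
    q.toSubgraph.Adj u y ↔ p.toSubgraph.Adj u y := by
  induction h generalizing y with
  | refl => rfl
  | @rotate x b z a hbz c hbx h ih =>
    have hx : x ∈ rotationEnds p := ⟨_, h⟩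
    have hz : z ∈ rotationEnds p := ⟨_, h.rotate a hbz c hbx⟩
    have hux : u ≠ x := fun e => hu (e ▸ hx)
    have huz : u ≠ z := fun e => hu (e ▸ hz)
    have hub : u ≠ b := by
      rintro rfl
      exact hnbr z ((ih z).mp (by simp)) hz
    rw [← ih]
    simp [hux.symm, huz.symm, hub.symm]

end RotationReachable

theorem exists_toSubgraph_adj_mem_rotationEnds (hu : u ∈ p.support) (huC : u ∉ rotationEnds p)
    (hx : x ∈ rotationEnds p) (hux : G.Adj u x) :
    ∃ y ∈ rotationEnds p, p.toSubgraph.Adj u y := by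
  by_contra! hnbr
  obtain ⟨q, hq⟩ := hx
  have huq : u ∈ q.support := hq.support_perm.mem_iff.mpr hu
  obtain ⟨a, c, rfl⟩ := Walk.mem_support_iff_exists_append.mp huq
  obtain ⟨z, huz, c, rfl⟩ := Walk.exists_eq_cons_of_ne hux.ne c
  have hz : z ∈ rotationEnds p := ⟨_, hq.rotate a huz c hux⟩
  refine hnbr z hz ((hq.toSubgraph_adj_iff huC (fun y hy hyC => hnbr y hyC hy) z).mp ?_)
  simp

/-- The ends of the paths that start at `v₀` and have vertex set `S`; for `S = V(P)` this is the set
`R` of Pósa's lemma. -/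
def spanningPathEnds (G : SimpleGraph V) (v₀ : V) (S : Set V) : Set V :=
  {v | ∃ P : G.Walk v₀ v, P.IsPath ∧ {x | x ∈ P.support} = S}

variable {R S U : Set V}

theorem finite_spanningPathEnds : (spanningPathEnds G v₀ S).Finite := by
  rcases (spanningPathEnds G v₀ S).eq_empty_or_nonempty with hempty | ⟨_, P, _, rfl⟩
  · exact hempty ▸ Set.finite_empty
  · refine P.support.finite_toSet.subset ?_
    rintro _ ⟨Q, -, hQP⟩
    exact hQP ▸ Q.end_mem_support

theorem rotationEnds_subset_spanningPathEnds (hp : p.IsPath) :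
    rotationEnds p ⊆ spanningPathEnds G v₀ {x | x ∈ p.support} :=
  fun _ ⟨q, hq⟩ => ⟨q, hq.isPath hp, Set.ext fun _ => hq.support_perm.mem_iff⟩

theorem extNbhd_union_rotationEnds_sdiff_subset (hCR : rotationEnds p ⊆ R)
    (hR : extNbhd G R ⊆ {x | x ∈ p.support}) :
    extNbhd G (U ∪ rotationEnds p) \ R ⊆
      (extNbhd G U \ R) ∪ ⋃ y ∈ rotationEnds p \ U, p.toSubgraph.neighborSet y := by
  rintro u ⟨⟨huUC, v, hv, huv⟩, huR⟩
  have huU : u ∉ U := fun h => huUC (.inl h)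
  rcases hv with hvU | hvC
  · exact .inl ⟨⟨huU, v, hvU, huv⟩, huR⟩
  · obtain ⟨y, hyC, huy⟩ := exists_toSubgraph_adj_mem_rotationEnds
      (hR ⟨huR, v, hCR hvC, huv⟩) (fun h => huR (hCR h)) hvC huv
    by_cases hyU : y ∈ U
    · exact .inl ⟨⟨huU, y, hyU, huy.adj_sub⟩, huR⟩
    · exact .inr (Set.mem_biUnion ⟨hyC, hyU⟩ huy.symm)

theorem encard_extNbhd_rotationEnds_sdiff_add_one_le (hp : p.IsPath)
    (hCR : rotationEnds p ⊆ R) (hR : extNbhd G R ⊆ {x | x ∈ p.support}) :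
    (extNbhd G (rotationEnds p) \ R).encard + 1 ≤ 2 * (rotationEnds p).encard := by
  have hsub := extNbhd_union_rotationEnds_sdiff_subset (U := ∅) hCR hR
  have hempty : extNbhd G ∅ = ∅ := by simp [extNbhd]
  rw [Set.empty_union, hempty, Set.empty_sdiff, Set.empty_union, Set.sdiff_empty] at hsub
  exact (add_le_add_left (Set.encard_le_encard hsub) 1).trans <|
    encard_biUnion_neighborSet_toSubgraph_add_one_le hp (end_mem_rotationEnds p)

theorem encard_extNbhd_union_rotationEnds_sdiff_add_one_le (hp : p.IsPath)
    (hCR : rotationEnds p ⊆ R) (hR : extNbhd G R ⊆ {x | x ∈ p.support})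
    (hU : (extNbhd G U \ R).encard + 1 ≤ 2 * U.encard) :
    (extNbhd G (U ∪ rotationEnds p) \ R).encard + 1 ≤ 2 * (U ∪ rotationEnds p).encard := by
  set C := rotationEnds p
  calc (extNbhd G (U ∪ C) \ R).encard + 1
      ≤ (extNbhd G U \ R).encard + 2 * (C \ U).encard + 1 := by
        gcongr
        refine (Set.encard_le_encard (extNbhd_union_rotationEnds_sdiff_subset hCR hR)).trans ?_
        refine (Set.encard_union_le _ _).trans (add_le_add_right ?_ _)
        exact encard_biUnion_neighborSet_toSubgraph_le hp _
    _ = ((extNbhd G U \ R).encard + 1) + 2 * (C \ U).encard := add_right_comm ..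
    _ ≤ 2 * U.encard + 2 * (C \ U).encard := by gcongr
    _ = 2 * (U ∪ C).encard := by
        rw [← mul_add, ← Set.encard_union_eq Set.disjoint_sdiff_right, Set.union_sdiff_self]

theorem encard_extNbhd_spanningPathEnds_add_one_le
    (hne : (spanningPathEnds G v₀ S).Nonempty)
    (hN : extNbhd G (spanningPathEnds G v₀ S) ⊆ S) :
    (extNbhd G (spanningPathEnds G v₀ S)).encard + 1 ≤ 2 * (spanningPathEnds G v₀ S).encard := by
  set R := spanningPathEnds G v₀ S
  have hsdiff : (extNbhd G R \ R).encard + 1 ≤ 2 * R.encard := by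
    refine induction_on_union_cover (motive := fun U => (extNbhd G U \ R).encard + 1 ≤ 2 * U.encard)
      finite_spanningPathEnds hne ?_
    rintro w ⟨p, hp, rfl⟩
    have hCR : rotationEnds p ⊆ R := rotationEnds_subset_spanningPathEnds hp
    exact ⟨rotationEnds p, hCR, end_mem_rotationEnds p,
      encard_extNbhd_rotationEnds_sdiff_add_one_le hp hCR hN,
      fun U => encard_extNbhd_union_rotationEnds_sdiff_add_one_le hp hCR hN⟩
  have hdisj : Disjoint (extNbhd G R) R := Set.disjoint_left.mpr fun _ h => h.1
  rwa [hdisj.sdiff_eq_left] at hsdiff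

theorem extNbhd_spanningPathEnds_subset {P : G.Walk v₀ w} (hP : P.IsPath)
    (hmax : ∀ (b : V) (Q : G.Walk v₀ b), Q.IsPath → Q.length ≤ P.length) :
    extNbhd G (spanningPathEnds G v₀ {x | x ∈ P.support}) ⊆ {x | x ∈ P.support} := by
  rintro u ⟨-, v, ⟨Q, hQ, hQP⟩, huv⟩
  by_contra huP
  have huQ : u ∉ Q.support := fun h => huP (hQP ▸ h)
  have hperm : Q.support.Perm P.support :=
    (List.perm_ext_iff_of_nodup hQ.support_nodup hP.support_nodup).mpr (Set.ext_iff.mp hQP)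
  have hlen : Q.length = P.length := by simpa using hperm.length_eq
  have hle := hmax u _ (hQ.concat huQ huv.symm)
  rw [Walk.length_concat] at hle
  lia

theorem posa_lemma_general {P : G.Walk v₀ w} (hP : P.IsPath)
    (hmax : ∀ (b : V) (Q : G.Walk v₀ b), Q.IsPath → Q.length ≤ P.length) :
    (extNbhd G (spanningPathEnds G v₀ {x | x ∈ P.support})).encard + 1 ≤
      2 * (spanningPathEnds G v₀ {x | x ∈ P.support}).encard :=
  encard_extNbhd_spanningPathEnds_add_one_le ⟨w, P, hP, rfl⟩
    (extNbhd_spanningPathEnds_subset hP hmax)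

end

/-- **Pósa's lemma.** Let `P` be a longest path in `G`, with endpoints `v₀` and
`v_t`, and let `R` be the set of vertices `v ∈ V(P)` for which there is a path `P'`
with `V(P') = V(P)` and endpoints `v₀` and `v`. Then `|N_G(R)| ≤ 2|R| − 1`. -/
theorem posa_lemma
    {V : Type*} [Fintype V] (G : SimpleGraph V)
    (v₀ vt : V) (P : G.Walk v₀ vt) (hP : P.IsPath)
    (hmax : ∀ (a b : V) (Q : G.Walk a b), Q.IsPath → Q.length ≤ P.length) :
    ((extNbhd G {v | ∃ P' : G.Walk v₀ v, P'.IsPath ∧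
        {x | x ∈ P'.support} = {x | x ∈ P.support}}).ncard : ℤ)
      ≤ 2 * ({v | ∃ P' : G.Walk v₀ v, P'.IsPath ∧
        {x | x ∈ P'.support} = {x | x ∈ P.support}}.ncard : ℤ) - 1 := by
  have h := posa_lemma_general hP (hmax v₀)
  rw [← (Set.toFinite _).cast_ncard_eq, ← (Set.toFinite _).cast_ncard_eq] at h
  exact le_sub_iff_add_le.mpr (mod_cast h)
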